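/- Let V be a finite-dimensional real vector space with a symmetric bilinear form ⟨·,·⟩ (not necessarily nondegenerate), and let U and W be subspaces of V. Then the following are equivalent: (1) there exists a linear isometry f : V → V with respect to ⟨·,·⟩ such that U = f(W); (2) sign(U) = sign(W) and dim(U ∩ rad(V)) = dim(W ∩ rad(V)). -/

import Mathlib

open Module

noncomputable section

/-- The radical of a subspace `W` with respect to a bilinear form `B`:
the set of vectors of `W` orthogonal to every vector of `W`. -/
def rad {V : Type*} [AddCommGroup V] [Module ℝ V] (B : LinearMap.BilinForm ℝ V)
    (W : Submodule ℝ V) : Submodule ℝ V :=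
  W ⊓ LinearMap.BilinForm.orthogonal B W

/-- The maximal dimension of a subspace of `W` on which `B` is positive definite. -/
def posIdx {V : Type*} [AddCommGroup V] [Module ℝ V] (B : LinearMap.BilinForm ℝ V)
    (W : Submodule ℝ V) : ℕ :=
  sSup {k | ∃ P : Submodule ℝ V, P ≤ W ∧ finrank ℝ P = k ∧ ∀ x ∈ P, x ≠ 0 → 0 < B x x}

/-- The maximal dimension of a subspace of `W` on which `B` is negative definite. -/
def negIdx {V : Type*} [AddCommGroup V] [Module ℝ V] (B : LinearMap.BilinForm ℝ V)
    (W : Submodule ℝ V) : ℕ :=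
  sSup {k | ∃ P : Submodule ℝ V, P ≤ W ∧ finrank ℝ P = k ∧ ∀ x ∈ P, x ≠ 0 → B x x < 0}

/-- The signature `(s, t, u)` of a subspace `W` with respect to a bilinear form `B`. -/
def signat {V : Type*} [AddCommGroup V] [Module ℝ V] (B : LinearMap.BilinForm ℝ V)
    (W : Submodule ℝ V) : ℕ × ℕ × ℕ :=
  (posIdx B W, negIdx B W, finrank ℝ (rad B W))

/-- The standard inner product of signature `(p, q)` on `ℝ^(p+q)`,
given by the diagonal matrix `I_{p,q}`. -/
def stdForm (p q : ℕ) : LinearMap.BilinForm ℝ (Fin (p + q) → ℝ) :=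
  Matrix.toLinearMap₂' ℝ (Matrix.diagonal fun i => if (i : ℕ) < p then (1 : ℝ) else -1)

/-!
Split off from `W` and `U` complements `A` and `A'` of their intersections with `rad V`. This
changes neither index, so `A` and `A'` have the same indices and the same dimension and are
isometric by Sylvester's law. The form induces a nondegenerate form on a complement of `rad V`,
where Witt's theorem extends the isometry `A ≃ A'`; on `rad V` itself any linear automorphism is
allowed, so `W ∩ rad V` can be moved to `U ∩ rad V` independently.

For Witt's theorem, an isometry defined on a subspace with nondegenerate restriction is realised on
an orthogonal basis by a product of reflections. If instead some `x ≠ 0` in the subspace is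
orthogonal to all of it, the isometry is first extended to a vector `y` with `⟨x, y⟩ = 1`.
-/

lemma exists_disjoint_and_inf_sup_eq {α : Type*} [Lattice α] [BoundedOrder α] [IsModularLattice α]
    [ComplementedLattice α] (w r : α) : ∃ a, Disjoint (w ⊓ r) a ∧ Disjoint a r ∧ w ⊓ r ⊔ a = w := by
  obtain ⟨a, ha, hwa⟩ := IsModularLattice.exists_disjoint_and_sup_eq (inf_le_left : w ⊓ r ≤ w)
  have haw : a ≤ w := hwa ▸ le_sup_right
  refine ⟨a, ha, ?_, hwa⟩
  rw [disjoint_iff, ← inf_eq_left.2 haw, inf_assoc, inf_comm, ha.eq_bot]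

lemma exists_equiv_comp_eq_of_card_fiber_eq {α β γ : Type*} [Finite α] [Finite β] {f : α → γ}
    {g : β → γ} (h : ∀ c, {a | f a = c}.ncard = {b | g b = c}.ncard) : ∃ σ : α ≃ β, g ∘ σ = f :=
  ⟨.ofFiberEquiv fun c => (Finite.card_eq.1 (h c)).some, funext (Equiv.ofFiberEquiv_map _)⟩

lemma map_eq_of_forall_eq_coe_linearEquiv {R M M' : Type*} [Semiring R] [AddCommMonoid M]
    [Module R M] [AddCommMonoid M'] [Module R M'] {N : Submodule R M} {N' : Submodule R M'}
    {f : M →ₗ[R] M'} (e : N ≃ₗ[R] N') (hf : ∀ x : N, f x = e x) : N.map f = N' := by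
  have hfe : f.domRestrict N = N'.subtype ∘ₗ e.toLinearMap := LinearMap.ext hf
  rw [← LinearMap.range_domRestrict, hfe, LinearMap.range_comp_of_range_eq_top _ e.range,
    N'.range_subtype]

lemma exists_linearEquiv_map_eq_of_finrank_eq {K E : Type*} [DivisionRing K] [AddCommGroup E]
    [Module K E] [FiniteDimensional K E] {N N' : Submodule K E}
    (hN : finrank K N = finrank K N') : ∃ g : E ≃ₗ[K] E, N.map g.toLinearMap = N' := by
  obtain ⟨g, hg⟩ := Submodule.exists_linearEquiv_restrict_eq (LinearEquiv.ofFinrankEq N N' hN)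
  exact ⟨g, map_eq_of_forall_eq_coe_linearEquiv _ fun x => (hg x).symm⟩

lemma bilinForm_equivalent_of_toQuadraticMap_equivalent {K V V' : Type*} [Field K] [NeZero (2 : K)]
    [AddCommGroup V] [Module K V] [AddCommGroup V'] [Module K V'] {B : LinearMap.BilinForm K V}
    {B' : LinearMap.BilinForm K V'} (hB : B.IsSymm) (hB' : B'.IsSymm)
    (h : B.toQuadraticMap.Equivalent B'.toQuadraticMap) : B.Equivalent B' := by
  obtain ⟨e⟩ := h
  have he : B'.comp e.toLinearEquiv.toLinearMap e.toLinearEquiv.toLinearMap = B :=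
    LinearMap.BilinForm.ext_of_isSymm ⟨fun _ _ => hB'.eq _ _⟩ hB e.map_app
  exact ⟨⟨e.toLinearEquiv, LinearMap.congr_fun₂ he⟩⟩

section WittExtension

variable {K V : Type*} [Field K] [AddCommGroup V] [Module K V] {B : LinearMap.BilinForm K V}

/-- The linear map `G` preserves the bilinear form `B` on the subspace `W`. Partial isometries
defined on `W` are represented by such a `G`, whose values outside of `W` are irrelevant. -/
def IsometricOn (B : LinearMap.BilinForm K V) (W : Submodule K V) (G : V →ₗ[K] V) : Prop :=
  ∀ x ∈ W, ∀ y ∈ W, B (G x) (G y) = B x y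

lemma exists_reflection_isometryEquiv (hB : B.IsSymm) {u : V} (hu : B u u ≠ 0) :
    ∃ s : B.IsometryEquiv B, s u = -u ∧ (∀ v, B u v = 0 → s v = v) ∧
      ∀ v, 2 * B u v = B u u → s v = v - u := by
  have hrefl : LinearMap.IsReflective B u :=
    ⟨.of_ne_zero hu, fun _ => (isUnit_iff_ne_zero.2 hu).dvd⟩
  have hcoroot (v : V) : B u u * hrefl.coroot B v = 2 * B u v := by simp
  let s : B.IsometryEquiv B :=
    ⟨Module.reflection (hrefl.coroot_apply_self B), hrefl.isOrthogonal_reflection B ⟨hB.eq⟩⟩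
  have hs (v : V) : s v = v - hrefl.coroot B v • u :=
    Module.reflection_apply v (hrefl.coroot_apply_self B)
  refine ⟨s, Module.reflection_apply_self (hrefl.coroot_apply_self B),
    fun v hv => ?_, fun v hv => ?_⟩
  · have hzero : hrefl.coroot B v = 0 := by
      simpa only [hv, mul_zero, mul_eq_zero, hu, false_or] using hcoroot v
    simp [hs, hzero]
  · have hone : hrefl.coroot B v = 1 := mul_left_cancel₀ hu (by rw [hcoroot, hv, mul_one])
    simp [hs, hone]

lemma exists_isometryEquiv_apply_eq [NeZero (2 : K)] (hB : B.IsSymm) {x z : V}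
    (hx : B x x ≠ 0) (hxz : B z z = B x x) :
    ∃ f : B.IsometryEquiv B, f x = z ∧ ∀ v, B x v = 0 → B z v = 0 → f v = v := by
  have hsymm : B z x = B x z := hB.eq z x
  -- By the parallelogram identity, `x - z` and `x + z` cannot both be isotropic.
  by_cases hsub : B (x - z) (x - z) = 0
  · have hadd : B (x + z) (x + z) ≠ 0 := by
      have hpar : B (x + z) (x + z) + B (x - z) (x - z) = 2 * (2 * B x x) := by
        simp only [map_add, map_sub, LinearMap.add_apply, LinearMap.sub_apply, hxz]
        ring
      rw [hsub, add_zero] at hpar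
      rw [hpar]
      exact mul_ne_zero (NeZero.ne _) (mul_ne_zero (NeZero.ne _) hx)
    obtain ⟨s, -, hs_fix, hs⟩ := exists_reflection_isometryEquiv hB hadd
    obtain ⟨t, ht_neg, ht_fix, -⟩ := exists_reflection_isometryEquiv hB (hxz ▸ hx : B z z ≠ 0)
    have hsx : s x = -z := by
      rw [hs x]
      · abel
      · simp only [map_add, LinearMap.add_apply, hsymm, hxz]
        ring
    refine ⟨s.trans t, ?_, fun v hxv hzv => ?_⟩
    · change t (s x) = z
      rw [hsx, map_neg, ht_neg, neg_neg]
    · change t (s v) = v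
      rw [hs_fix v (by simp [hxv, hzv]), ht_fix v hzv]
  · obtain ⟨s, -, hs_fix, hs⟩ := exists_reflection_isometryEquiv hB hsub
    refine ⟨s, ?_, fun v hxv hzv => hs_fix v (by simp [hxv, hzv])⟩
    rw [hs x, sub_sub_cancel]
    simp only [map_sub, LinearMap.sub_apply, hsymm, hxz]
    ring

lemma exists_isometryEquiv_of_iIsOrtho [NeZero (2 : K)] (hB : B.IsSymm) {ι : Type*} [Finite ι]
    {v v' : ι → V} (hv : B.iIsOrtho v) (hv_ne : ∀ i, B (v i) (v i) ≠ 0)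
    (hgram : ∀ i j, B (v' i) (v' j) = B (v i) (v j)) :
    ∃ f : B.IsometryEquiv B, ∀ i, f (v i) = v' i := by
  classical
  have := Fintype.ofFinite ι
  suffices ∀ s : Finset ι, ∃ f : B.IsometryEquiv B, ∀ i ∈ s, f (v i) = v' i by
    simpa using this Finset.univ
  intro s
  induction s using Finset.induction_on with
  | empty => exact ⟨.refl B, by simp⟩
  | insert i s hi ih =>
    obtain ⟨f, hf⟩ := ih
    have hf_symm : f (f.symm (v' i)) = v' i := f.toLinearEquiv.apply_symm_apply _
    have hortho : ∀ j ∈ s, B (v i) (v j) = 0 := fun j hj => hv (ne_of_mem_of_not_mem hj hi).symm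
    obtain ⟨h, hh, hh_fix⟩ := exists_isometryEquiv_apply_eq hB (z := f.symm (v' i)) (hv_ne i) (by
      rw [← f.map_app, hf_symm, hgram])
    refine ⟨h.trans f, fun j hj => ?_⟩
    change f (h (v j)) = v' j
    obtain rfl | hj := Finset.mem_insert.1 hj
    · rw [hh, hf_symm]
    · rw [hh_fix _ (hortho j hj), hf j hj]
      rw [← f.map_app, hf_symm, hf j hj, hgram, hortho j hj]

theorem IsometricOn.exists_isometryEquiv_eqOn_of_nondegenerate_restrict [NeZero (2 : K)]
    {W : Submodule K V} [FiniteDimensional K W] {G : V →ₗ[K] V} (hG : IsometricOn B W G)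
    (hB : B.IsSymm) (hW : (B.restrict W).Nondegenerate) :
    ∃ f : B.IsometryEquiv B, Set.EqOn f G W := by
  have : Invertible (2 : K) := invertibleOfNonzero (NeZero.ne _)
  obtain ⟨b, hb⟩ := LinearMap.BilinForm.exists_orthogonal_basis
    (B := B.restrict W) ⟨(hB.restrict W).eq⟩
  obtain ⟨f, hf⟩ := exists_isometryEquiv_of_iIsOrtho hB (v := fun i => (b i : V))
    (v' := fun i => G (b i)) (fun i j hij => hb hij)
    (fun i => LinearMap.BilinForm.iIsOrtho.not_isOrtho_basis_self_of_nondegenerate hb hW i)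
    (fun i j => hG _ (b i).2 _ (b j).2)
  have hfG : f.toLinearEquiv.toLinearMap ∘ₗ W.subtype = G ∘ₗ W.subtype := b.ext hf
  exact ⟨f, fun w hw => LinearMap.congr_fun hfG ⟨w, hw⟩⟩

lemma exists_forall_apply_map_eq [FiniteDimensional K V] (hB : B.Nondegenerate)
    {W : Submodule K V} {G : V →ₗ[K] V} (hG : Disjoint W (LinearMap.ker G)) (φ : Dual K V) :
    ∃ z, ∀ w ∈ W, B z (G w) = φ w := by
  obtain ⟨H, hH⟩ := (G.domRestrict W).exists_leftInverse_of_injective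
    (LinearMap.ker_eq_bot.2 (LinearMap.injective_domRestrict_iff.2 hG))
  refine ⟨(B.toDual hB).symm (φ ∘ₗ W.subtype ∘ₗ H), fun w hw => ?_⟩
  have hHw : H (G w) = ⟨w, hw⟩ := LinearMap.congr_fun hH ⟨w, hw⟩
  rw [LinearMap.BilinForm.apply_toDual_symm_apply]
  simp [hHw]

lemma exists_apply_add_smul_self_eq [NeZero (2 : K)] (hB : B.IsSymm) {z u : V}
    (hu : B u u = 0) (hzu : B z u ≠ 0) (a : K) :
    ∃ c : K, B (z + c • u) (z + c • u) = a := by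
  refine ⟨(a - B z z) / (2 * B z u), ?_⟩
  simp only [map_add, map_smul, LinearMap.add_apply, LinearMap.smul_apply, smul_eq_mul,
    hu, hB.eq u z]
  field_simp [NeZero.ne (2 : K)]
  ring


lemma IsometricOn.sup_span_singleton {W : Submodule K V} {G : V →ₗ[K] V}
    (hG : IsometricOn B W G) (hB : B.IsSymm) {y : V} (hyW : ∀ w ∈ W, B (G y) (G w) = B y w)
    (hyy : B (G y) (G y) = B y y) : IsometricOn B (W ⊔ K ∙ y) G := by
  intro u hu v hv
  simp only [Submodule.mem_sup, Submodule.mem_span_singleton, exists_exists_eq_and] at hu hv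
  obtain ⟨w, hw, a, rfl⟩ := hu
  obtain ⟨w', hw', b, rfl⟩ := hv
  simp only [map_add, map_smul, LinearMap.add_apply, LinearMap.smul_apply, hG w hw w' hw',
    hyW w' hw', hyy, hB.eq (G w) (G y), hB.eq w y, hyW w hw]

lemma IsometricOn.exists_isometricOn_sup_span_singleton [NeZero (2 : K)] [FiniteDimensional K V]
    {W : Submodule K V} {G : V →ₗ[K] V} (hG : IsometricOn B W G) (hB : B.IsSymm)
    (hB_nondeg : B.Nondegenerate) (hker : Disjoint W (LinearMap.ker G)) {x y : V} (hx : x ∈ W)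
    (hxW : ∀ w ∈ W, B x w = 0) (hxy : B x y = 1) :
    ∃ G' : V →ₗ[K] V, IsometricOn B (W ⊔ K ∙ y) G' ∧ Disjoint (W ⊔ K ∙ y) (LinearMap.ker G') ∧
      Set.EqOn G' G W := by
  have hGxW (w : V) (hw : w ∈ W) : B (G x) (G w) = 0 := (hG x hx w hw).trans (hxW w hw)
  obtain ⟨z₀, hz₀⟩ := exists_forall_apply_map_eq hB_nondeg hker (B y)
  -- Adding a multiple of the isotropic vector `G x ∈ (G W)ᗮ` corrects the norm of `z₀` without
  -- affecting its pairing with `G W`.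
  obtain ⟨c, hzz⟩ := exists_apply_add_smul_self_eq hB (hGxW x hx)
    (by simp [hz₀ x hx, hB.eq y x, hxy] : B z₀ (G x) ≠ 0) (B y y)
  set z := z₀ + c • G x
  have hz (w : V) (hw : w ∈ W) : B z (G w) = B y w := by simp [z, hz₀ w hw, hGxW w hw]
  let G' : V →ₗ[K] V := G + (B x).smulRight (z - G y)
  have hG'_eqOn : Set.EqOn G' G W := fun w hw => by simp [G', hxW w hw]
  have hG'y : G' y = z := by simp [G', hxy]
  have hG' : IsometricOn B (W ⊔ K ∙ y) G' := by
    refine IsometricOn.sup_span_singleton (fun u hu v hv => ?_) hB (fun w hw => ?_) ?_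
    · rw [hG'_eqOn hu, hG'_eqOn hv, hG u hu v hv]
    · rw [hG'y, hG'_eqOn hw, hz w hw]
    · rw [hG'y, hzz]
  refine ⟨G', hG', ?_, hG'_eqOn⟩
  simp only [LinearMap.disjoint_ker, Submodule.mem_sup, Submodule.mem_span_singleton,
    exists_exists_eq_and]
  rintro _ ⟨w, hw, a, rfl⟩ hker_wy
  have ha : a = 0 := by
    have hpair := hG' x (Submodule.mem_sup_left hx) (w + a • y)
      (Submodule.add_mem_sup hw (Submodule.smul_mem _ a (Submodule.mem_span_singleton_self y)))
    simpa [hker_wy, hxW w hw, hxy] using hpair.symm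
  subst ha
  rw [zero_smul, add_zero] at hker_wy ⊢
  exact LinearMap.disjoint_ker.1 hker w hw (by rw [← hG'_eqOn hw, hker_wy])

theorem IsometricOn.exists_isometryEquiv_eqOn_of_nondegenerate [NeZero (2 : K)]
    [FiniteDimensional K V] {W : Submodule K V} {G : V →ₗ[K] V} (hG : IsometricOn B W G)
    (hB : B.IsSymm) (hB_nondeg : B.Nondegenerate) (hker : Disjoint W (LinearMap.ker G)) :
    ∃ f : B.IsometryEquiv B, Set.EqOn f G W := by
  induction W using WellFoundedGT.induction generalizing G with
  | ind W ih =>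
    by_cases hW : Disjoint W (B.orthogonal W)
    · exact hG.exists_isometryEquiv_eqOn_of_nondegenerate_restrict hB
        (B.nondegenerate_restrict_of_disjoint_orthogonal hB.isRefl hW)
    · obtain ⟨x, hxW, hx_ortho, hx0⟩ : ∃ x ∈ W, (∀ w ∈ W, B w x = 0) ∧ x ≠ 0 := by
        simpa [Submodule.disjoint_def] using hW
      replace hx_ortho (w : V) (hw : w ∈ W) : B x w = 0 := (hB.eq x w).trans (hx_ortho w hw)
      obtain ⟨y, hxy⟩ : ∃ y, B x y = 1 :=
        LinearMap.surjective (f := B x)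
          (fun hBx => hx0 (LinearMap.ker_eq_bot'.1 hB_nondeg.ker_eq_bot x hBx)) 1
      have hyW : y ∉ W := fun hy => by simp [hx_ortho y hy] at hxy
      obtain ⟨G', hG', hker', hG'G⟩ :=
        hG.exists_isometricOn_sup_span_singleton hB hB_nondeg hker hxW hx_ortho hxy
      obtain ⟨f, hf⟩ := ih (W ⊔ K ∙ y) (by simpa using hyW) hG' hker'
      exact ⟨f, (hf.mono (SetLike.coe_subset_coe.2 le_sup_left)).trans hG'G⟩

lemma apply_projectionOnto_ker (hB : B.IsSymm) {C : Submodule K V}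
    (hC : IsCompl C (LinearMap.ker B)) (x y : V) :
    B (C.projectionOnto _ hC x) (C.projectionOnto _ hC y) = B x y := by
  have hproj (v : V) : B (C.projectionOnto _ hC v) = B v := by
    rw [Submodule.coe_projectionOnto_apply, ← sub_eq_zero, ← map_sub, ← LinearMap.mem_ker,
      ← neg_mem_iff, neg_sub]
    exact Submodule.sub_projection_mem hC v
  rw [hproj, hB.eq, hproj, hB.eq]

lemma exists_mapsTo_sup_of_le_ker {A N : Submodule K V} (hB : B.IsSymm)
    (hA : Disjoint A (LinearMap.ker B)) (hN : N ≤ LinearMap.ker B) :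
    ∃ T : V →ₗ[K] V, Set.MapsTo T (N ⊔ A : Submodule K V) A ∧ ∀ x, B (T x) (T x) = B x x := by
  obtain ⟨C, hAC, hC⟩ := hA.exists_isCompl
  refine ⟨C.projection _ hC, fun x hx => ?_, fun x => apply_projectionOnto_ker hB hC x x⟩
  obtain ⟨n, hn, a, ha, rfl⟩ := Submodule.mem_sup.1 hx
  rwa [map_add, (Submodule.projection_apply_eq_zero_iff hC).2 (hN hn),
    Submodule.projection_apply_of_mem_left hC (hAC ha), zero_add]

lemma nondegenerate_restrict_of_isCompl_ker (hB : B.IsSymm) {C : Submodule K V}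
    (hC : IsCompl C (LinearMap.ker B)) : (B.restrict C).Nondegenerate := by
  refine ((hB.restrict C).isRefl.nondegenerate_iff_separatingLeft).2 ?_
  rw [LinearMap.separatingLeft_iff_ker_eq_bot, LinearMap.BilinForm.ker_restrict_eq_of_codisjoint
    hC.codisjoint fun x _ y hy => by rw [hB.eq, LinearMap.mem_ker.1 hy, LinearMap.zero_apply]]
  exact Submodule.disjoint_iff_comap_eq_bot.1 hC.disjoint

lemma exists_isometryEquiv_of_isCompl_ker [FiniteDimensional K V] (hB : B.IsSymm)
    {C : Submodule K V} (hC : IsCompl C (LinearMap.ker B))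
    (h : (B.restrict C).IsometryEquiv (B.restrict C)) (σ : C →ₗ[K] LinearMap.ker B)
    (g : LinearMap.ker B ≃ₗ[K] LinearMap.ker B) :
    ∃ f : B.IsometryEquiv B, (∀ c : C, f c = h c + σ c) ∧ ∀ r : LinearMap.ker B, f r = g r := by
  let F : V →ₗ[K] V := LinearMap.ofIsCompl hC
    (C.subtype ∘ₗ h.toLinearEquiv.toLinearMap + (LinearMap.ker B).subtype ∘ₗ σ)
    ((LinearMap.ker B).subtype ∘ₗ g.toLinearMap)
  have hF_left (c : C) : F c = h c + σ c := LinearMap.ofIsCompl_apply_left hC c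
  have hF_right (r : LinearMap.ker B) : F r = g r := LinearMap.ofIsCompl_apply_right hC r
  set π := C.projectionOnto _ hC
  have hπF (v : V) : π (F v) = h (π v) := by
    obtain ⟨⟨c, r⟩, rfl⟩ := (Submodule.prodEquivOfIsCompl C _ hC).surjective v
    simp [π, hF_left, hF_right]
  have hF_inj : Function.Injective F := by
    rw [← LinearMap.ker_eq_bot, LinearMap.ker_eq_bot']
    intro v hv
    have hπv : π v = 0 := h.toLinearEquiv.injective <| by
      simpa [hv] using (hπF v).symm
    lift v to LinearMap.ker B using (Submodule.projectionOnto_apply_eq_zero_iff hC).1 hπv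
    simpa [hF_right] using hv
  refine ⟨⟨LinearEquiv.ofInjectiveEndo F hF_inj, fun x y => ?_⟩, hF_left, hF_right⟩
  calc B (F x) (F y) = B (π (F x)) (π (F y)) := (apply_projectionOnto_ker hB hC _ _).symm
    _ = B (h (π x)) (h (π y)) := by rw [hπF, hπF]
    _ = B (π x) (π y) := h.map_app _ _
    _ = B x y := apply_projectionOnto_ker hB hC x y

theorem IsometricOn.exists_isometryEquiv_eqOn_and_eqOn_ker [NeZero (2 : K)]
    [FiniteDimensional K V] {A : Submodule K V} {G : V →ₗ[K] V} (hG : IsometricOn B A G)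
    (hB : B.IsSymm) (hA : Disjoint A (LinearMap.ker B))
    (hGA : Disjoint A ((LinearMap.ker B).comap G))
    (g : LinearMap.ker B ≃ₗ[K] LinearMap.ker B) :
    ∃ f : B.IsometryEquiv B, Set.EqOn f G A ∧ ∀ r : LinearMap.ker B, f r = g r := by
  obtain ⟨C, hAC, hC⟩ := hA.exists_isCompl
  set π := C.projectionOnto _ hC
  let ρ := (LinearMap.ker B).projectionOnto C hC.symm
  obtain ⟨h, hh⟩ : ∃ h : (B.restrict C).IsometryEquiv (B.restrict C),
      Set.EqOn h (π ∘ₗ G ∘ₗ C.subtype) (A.comap C.subtype) := by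
    refine IsometricOn.exists_isometryEquiv_eqOn_of_nondegenerate (fun x hx y hy => ?_)
      (hB.restrict C) (nondegenerate_restrict_of_isCompl_ker hB hC)
      (LinearMap.disjoint_ker.2 fun x hx hπGx => ?_)
    · exact (apply_projectionOnto_ker hB hC _ _).trans (hG _ hx _ hy)
    · exact Subtype.ext (Submodule.disjoint_def.1 hGA x hx
        ((Submodule.projectionOnto_apply_eq_zero_iff hC).1 hπGx))
  obtain ⟨f, hf_left, hf_right⟩ :=
    exists_isometryEquiv_of_isCompl_ker hB hC h (ρ ∘ₗ G ∘ₗ C.subtype) g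
  refine ⟨f, fun a ha => ?_, hf_right⟩
  calc f a = h ⟨a, hAC ha⟩ + ρ (G a) := hf_left ⟨a, hAC ha⟩
    _ = π (G a) + ρ (G a) := by rw [hh (x := ⟨a, hAC ha⟩) ha]; rfl
    _ = G a := Submodule.projection_add_projection_eq_self hC (G a)

theorem exists_isometryEquiv_map_sup_eq [NeZero (2 : K)] [FiniteDimensional K V] (hB : B.IsSymm)
    {A A' N N' : Submodule K V} (hA : Disjoint A (LinearMap.ker B))
    (hA' : Disjoint A' (LinearMap.ker B)) (hAA' : (B.restrict A).Equivalent (B.restrict A'))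
    (hN : N ≤ LinearMap.ker B) (hN' : N' ≤ LinearMap.ker B) (hNN' : finrank K N = finrank K N') :
    ∃ f : B.IsometryEquiv B, (N ⊔ A).map f.toLinearEquiv.toLinearMap = N' ⊔ A' := by
  obtain ⟨e⟩ := hAA'
  obtain ⟨G, hGe⟩ := LinearMap.exists_extend (A'.subtype ∘ₗ e.toLinearEquiv.toLinearMap)
  have hG (a : A) : G a = e a := LinearMap.congr_fun hGe a
  have hG_isom : IsometricOn B A G := fun x hx y hy => by
    simpa [hG ⟨x, hx⟩, hG ⟨y, hy⟩] using e.map_app ⟨y, hy⟩ ⟨x, hx⟩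
  have hG_ker : Disjoint A ((LinearMap.ker B).comap G) := by
    refine Submodule.disjoint_def.2 fun x hx hGx => ?_
    have hex : (e ⟨x, hx⟩ : V) = 0 :=
      Submodule.disjoint_def.1 hA' _ (e ⟨x, hx⟩).2 (hG ⟨x, hx⟩ ▸ hGx)
    simpa using hex
  obtain ⟨g, hg⟩ := exists_linearEquiv_map_eq_of_finrank_eq
    (N := N.comap (LinearMap.ker B).subtype) (N' := N'.comap (LinearMap.ker B).subtype) (by
      rw [(Submodule.comapSubtypeEquivOfLe hN).finrank_eq,
        (Submodule.comapSubtypeEquivOfLe hN').finrank_eq, hNN'])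
  obtain ⟨f, hfG, hfg⟩ := hG_isom.exists_isometryEquiv_eqOn_and_eqOn_ker hB hA hG_ker g
  refine ⟨f, ?_⟩
  have hfN : N.map f.toLinearEquiv.toLinearMap = N' := by
    have hf_comp : f.toLinearEquiv.toLinearMap ∘ₗ (LinearMap.ker B).subtype =
      (LinearMap.ker B).subtype ∘ₗ g.toLinearMap := LinearMap.ext hfg
    rw [← inf_eq_right.2 hN, ← Submodule.map_comap_subtype, ← Submodule.map_comp, hf_comp,
      Submodule.map_comp, hg, Submodule.map_comap_subtype, inf_eq_right.2 hN']
  have hfA : A.map f.toLinearEquiv.toLinearMap = A' :=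
    map_eq_of_forall_eq_coe_linearEquiv e.toLinearEquiv fun a => (hfG a.2).trans (hG a)
  rw [Submodule.map_sup, hfN, hfA]

end WittExtension

section Signature

variable {V V' : Type*} [AddCommGroup V] [Module ℝ V] [AddCommGroup V'] [Module ℝ V']
  {B : LinearMap.BilinForm ℝ V} {B' : LinearMap.BilinForm ℝ V'}
  {W : Submodule ℝ V} {W' : Submodule ℝ V'}

lemma negIdx_eq_posIdx_neg (B : LinearMap.BilinForm ℝ V) (W : Submodule ℝ V) :
    negIdx B W = posIdx (-B) W := by
  simp [negIdx, posIdx]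

lemma posIdx_le_posIdx_of_mapsTo [FiniteDimensional ℝ W'] (T : V →ₗ[ℝ] V')
    (hTW : Set.MapsTo T W W') (hT : ∀ x ∈ W, B' (T x) (T x) = B x x) :
    posIdx B W ≤ posIdx B' W' := by
  refine csSup_le_csSup ⟨finrank ℝ W', ?_⟩ ⟨0, ⊥, bot_le, finrank_bot ℝ V, ?_⟩ ?_
  · rintro _ ⟨P, hPW', rfl, -⟩
    exact Submodule.finrank_mono hPW'
  · simp +contextual
  · rintro _ ⟨P, hPW, rfl, hP⟩
    have hker : Disjoint P (LinearMap.ker T) := LinearMap.disjoint_ker.2 fun x hx hTx => by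
      by_contra hx0
      simpa [← hT x (hPW hx), hTx] using hP x hx hx0
    refine ⟨P.map T, Submodule.map_le_iff_le_comap.2 fun x hx => hTW (hPW hx), ?_, ?_⟩
    · rw [← LinearMap.range_domRestrict]
      exact LinearMap.finrank_range_of_inj (LinearMap.injective_domRestrict_iff.2 hker)
    · rintro _ ⟨x, hx, rfl⟩ hTx
      rw [hT x (hPW hx)]
      exact hP x hx fun hx0 => hTx (by rw [hx0, map_zero])

lemma negIdx_le_negIdx_of_mapsTo [FiniteDimensional ℝ W'] (T : V →ₗ[ℝ] V')
    (hTW : Set.MapsTo T W W') (hT : ∀ x ∈ W, B' (T x) (T x) = B x x) :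
    negIdx B W ≤ negIdx B' W' := by
  rw [negIdx_eq_posIdx_neg, negIdx_eq_posIdx_neg]
  exact posIdx_le_posIdx_of_mapsTo T hTW fun x hx => by simp [hT x hx]

lemma rad_map (f : V ≃ₗ[ℝ] V') (hf : ∀ x y, B' (f x) (f y) = B x y) (W : Submodule ℝ V) :
    rad B' (W.map f.toLinearMap) = (rad B W).map f.toLinearMap := by
  ext x
  obtain ⟨x, rfl⟩ := f.surjective x
  simp [rad, LinearMap.BilinForm.mem_orthogonal_iff, f.surjective.forall, hf]

lemma signat_map [FiniteDimensional ℝ W] (f : V ≃ₗ[ℝ] V') (hf : ∀ x y, B' (f x) (f y) = B x y) :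
    signat B' (W.map f.toLinearMap) = signat B W := by
  have hfW : Set.MapsTo f W (W.map f.toLinearMap) := fun x hx => Submodule.mem_map_of_mem hx
  have hfW_symm : Set.MapsTo f.symm (W.map f.toLinearMap) W := by
    rintro _ ⟨x, hx, rfl⟩
    simpa using hx
  have hf_symm (x : V') : B (f.symm x) (f.symm x) = B' x x := by simp [← hf]
  have hpos : posIdx B' (W.map f.toLinearMap) = posIdx B W := le_antisymm
    (posIdx_le_posIdx_of_mapsTo f.symm.toLinearMap hfW_symm fun x _ => hf_symm x)
    (posIdx_le_posIdx_of_mapsTo f.toLinearMap hfW fun x _ => hf x x)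
  have hneg : negIdx B' (W.map f.toLinearMap) = negIdx B W := le_antisymm
    (negIdx_le_negIdx_of_mapsTo f.symm.toLinearMap hfW_symm fun x _ => hf_symm x)
    (negIdx_le_negIdx_of_mapsTo f.toLinearMap hfW fun x _ => hf x x)
  rw [signat, signat, hpos, hneg, rad_map f hf, LinearEquiv.finrank_map_eq]

lemma finrank_map_inf_rad_top (f : V ≃ₗ[ℝ] V') (hf : ∀ x y, B' (f x) (f y) = B x y)
    (W : Submodule ℝ V) :
    finrank ℝ (W.map f.toLinearMap ⊓ rad B' ⊤ : Submodule ℝ V') =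
      finrank ℝ (W ⊓ rad B ⊤ : Submodule ℝ V) := by
  have hrad : rad B' ⊤ = (rad B ⊤).map f.toLinearMap := by
    rw [← rad_map f hf, Submodule.map_top, f.range]
  rw [hrad, ← Submodule.map_inf _ f.injective, LinearEquiv.finrank_map_eq]

lemma rad_top (hB : B.IsSymm) : rad B ⊤ = LinearMap.ker B := by
  rw [rad, top_inf_eq, LinearMap.BilinForm.orthogonal_top_eq_ker hB.isRefl]

lemma posIdx_sup_of_le_ker {A N : Submodule ℝ V} [FiniteDimensional ℝ A] [FiniteDimensional ℝ N]
    (hB : B.IsSymm) (hA : Disjoint A (LinearMap.ker B)) (hN : N ≤ LinearMap.ker B) :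
    posIdx B (N ⊔ A) = posIdx B A := by
  obtain ⟨T, hTA, hT⟩ := exists_mapsTo_sup_of_le_ker hB hA hN
  exact le_antisymm (posIdx_le_posIdx_of_mapsTo T hTA fun x _ => hT x)
    (posIdx_le_posIdx_of_mapsTo .id (SetLike.coe_subset_coe.2 le_sup_right) fun _ _ => rfl)

lemma negIdx_sup_of_le_ker {A N : Submodule ℝ V} [FiniteDimensional ℝ A] [FiniteDimensional ℝ N]
    (hB : B.IsSymm) (hA : Disjoint A (LinearMap.ker B)) (hN : N ≤ LinearMap.ker B) :
    negIdx B (N ⊔ A) = negIdx B A := by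
  obtain ⟨T, hTA, hT⟩ := exists_mapsTo_sup_of_le_ker hB hA hN
  exact le_antisymm (negIdx_le_negIdx_of_mapsTo T hTA fun x _ => hT x)
    (negIdx_le_negIdx_of_mapsTo .id (SetLike.coe_subset_coe.2 le_sup_right) fun _ _ => rfl)

lemma posIdx_eq_sigPos [FiniteDimensional ℝ W] :
    posIdx B W = sigPos (B.restrict W).toQuadraticMap := by
  refine IsGreatest.csSup_eq ⟨?_, ?_⟩
  · obtain ⟨P, hP, hP_pos⟩ := exists_finrank_eq_sigPos_and_posDef (B.restrict W).toQuadraticMap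
    refine ⟨P.map W.subtype, Submodule.map_subtype_le W P,
      (Submodule.finrank_map_subtype_eq W P).trans hP, ?_⟩
    rintro _ ⟨x, hx, rfl⟩ hx0
    exact hP_pos ⟨x, hx⟩ (by simpa using hx0)
  · rintro _ ⟨P, hPW, rfl, hP⟩
    rw [← (Submodule.comapSubtypeEquivOfLe hPW).finrank_eq]
    exact le_sigPos_of_posDef _ fun x hx => hP _ x.2 (by simpa using hx)

lemma negIdx_eq_sigNeg [FiniteDimensional ℝ W] :
    negIdx B W = sigNeg (B.restrict W).toQuadraticMap := by
  rw [negIdx_eq_posIdx_neg, posIdx_eq_sigPos, ← sigPos_neg, ← LinearMap.BilinMap.toQuadraticMap_neg]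
  rfl

lemma rad_eq_map_radical (hB : B.IsSymm) (W : Submodule ℝ V) :
    rad B W = (B.restrict W).toQuadraticMap.radical.map W.subtype := by
  rw [QuadraticMap.radical_eq_ker_associated,
    QuadraticMap.associated_left_inverse ℝ (hB.restrict W).eq]
  refine le_antisymm (LinearMap.BilinForm.inf_orthogonal_self_le_ker_restrict hB.isRefl) ?_
  rintro _ ⟨x, hx, rfl⟩
  exact ⟨x.2, fun w hw => (hB.eq _ _).trans (LinearMap.congr_fun hx ⟨w, hw⟩)⟩

lemma posIdx_add_negIdx_add_finrank_rad [FiniteDimensional ℝ W] (hB : B.IsSymm) :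
    posIdx B W + negIdx B W + finrank ℝ (rad B W) = finrank ℝ W := by
  rw [posIdx_eq_sigPos, negIdx_eq_sigNeg, rad_eq_map_radical hB, Submodule.finrank_map_subtype_eq,
    QuadraticForm.sigPos_add_sigNeg_add_radical]

lemma equivalent_of_sigPos_eq_of_sigNeg_eq [FiniteDimensional ℝ V] [FiniteDimensional ℝ V']
    {Q : QuadraticForm ℝ V} {Q' : QuadraticForm ℝ V'} (hpos : sigPos Q = sigPos Q')
    (hneg : sigNeg Q = sigNeg Q') (hrank : finrank ℝ V = finrank ℝ V') : Q.Equivalent Q' := by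
  obtain ⟨w, hw⟩ := Q.equivalent_signType_weighted_sum_squared
  obtain ⟨w', hw'⟩ := Q'.equivalent_signType_weighted_sum_squared
  have hrad : finrank ℝ Q.radical = finrank ℝ Q'.radical := by
    have hQ := QuadraticForm.sigPos_add_sigNeg_add_radical (Q := Q)
    have hQ' := QuadraticForm.sigPos_add_sigNeg_add_radical (Q := Q')
    omega
  rw [QuadraticForm.sigPos_of_equiv_weightedSumSquares hw,
    QuadraticForm.sigPos_of_equiv_weightedSumSquares hw'] at hpos
  rw [QuadraticForm.sigNeg_of_equiv_weightedSumSquares hw,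
    QuadraticForm.sigNeg_of_equiv_weightedSumSquares hw'] at hneg
  rw [QuadraticForm.finrank_radical_of_equiv_weightedSumSquares hw,
    QuadraticForm.finrank_radical_of_equiv_weightedSumSquares hw'] at hrad
  have hpos_iff (s : SignType) : (0 : ℝ) < s ↔ s = 1 := by cases s <;> simp
  have hneg_iff (s : SignType) : (s : ℝ) < 0 ↔ s = -1 := by cases s <;> simp
  have hzero_iff (s : SignType) : (s : ℝ) = 0 ↔ s = 0 := by cases s <;> simp
  simp only [hpos_iff, hneg_iff, hzero_iff] at hpos hneg hrad
  obtain ⟨σ, hσ⟩ : ∃ σ : Fin (finrank ℝ V) ≃ Fin (finrank ℝ V'), w' ∘ σ = w := by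
    refine exists_equiv_comp_eq_of_card_fiber_eq fun s => ?_
    cases s
    exacts [hrad, hneg, hpos]
  refine hw.trans (.trans ⟨⟨LinearEquiv.funCongrLeft ℝ ℝ σ.symm, fun x => ?_⟩⟩ hw'.symm)
  simp only [QuadraticMap.weightedSumSquares_apply]
  rw [← σ.sum_comp]
  simp [← hσ, LinearEquiv.funCongrLeft_apply, LinearMap.funLeft_apply]

theorem restrict_equivalent_of_posIdx_eq_of_negIdx_eq [FiniteDimensional ℝ W]
    [FiniteDimensional ℝ W'] (hB : B.IsSymm) (hB' : B'.IsSymm)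
    (hpos : posIdx B W = posIdx B' W') (hneg : negIdx B W = negIdx B' W')
    (hrank : finrank ℝ W = finrank ℝ W') : (B.restrict W).Equivalent (B'.restrict W') := by
  rw [posIdx_eq_sigPos, posIdx_eq_sigPos] at hpos
  rw [negIdx_eq_sigNeg, negIdx_eq_sigNeg] at hneg
  exact bilinForm_equivalent_of_toQuadraticMap_equivalent (hB.restrict W) (hB'.restrict W')
    (equivalent_of_sigPos_eq_of_sigNeg_eq hpos hneg hrank)

theorem exists_isometryEquiv_map_eq_of_signat_eq [FiniteDimensional ℝ V] (hB : B.IsSymm)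
    {W U : Submodule ℝ V} (hsign : signat B W = signat B U)
    (hker : finrank ℝ (W ⊓ LinearMap.ker B : Submodule ℝ V) =
      finrank ℝ (U ⊓ LinearMap.ker B : Submodule ℝ V)) :
    ∃ f : B.IsometryEquiv B, W.map f.toLinearEquiv.toLinearMap = U := by
  obtain ⟨hpos, hneg, hrad⟩ : posIdx B W = posIdx B U ∧ negIdx B W = negIdx B U ∧
      finrank ℝ (rad B W) = finrank ℝ (rad B U) := by simpa [signat] using hsign
  have hrank : finrank ℝ W = finrank ℝ U := by
    rw [← posIdx_add_negIdx_add_finrank_rad hB, hpos, hneg, hrad,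
      posIdx_add_negIdx_add_finrank_rad hB]
  obtain ⟨A, hA, hA_ker, hWA⟩ := exists_disjoint_and_inf_sup_eq W (LinearMap.ker B)
  obtain ⟨A', hA', hA'_ker, hUA'⟩ := exists_disjoint_and_inf_sup_eq U (LinearMap.ker B)
  have hAA' : (B.restrict A).Equivalent (B.restrict A') := by
    refine restrict_equivalent_of_posIdx_eq_of_negIdx_eq hB hB ?_ ?_ ?_
    · rwa [← hWA, ← hUA', posIdx_sup_of_le_ker hB hA_ker inf_le_right,
        posIdx_sup_of_le_ker hB hA'_ker inf_le_right] at hpos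
    · rwa [← hWA, ← hUA', negIdx_sup_of_le_ker hB hA_ker inf_le_right,
        negIdx_sup_of_le_ker hB hA'_ker inf_le_right] at hneg
    · have hW := Submodule.finrank_sup_add_finrank_inf_eq (W ⊓ LinearMap.ker B) A
      have hU := Submodule.finrank_sup_add_finrank_inf_eq (U ⊓ LinearMap.ker B) A'
      rw [hWA, hA.eq_bot, finrank_bot] at hW
      rw [hUA', hA'.eq_bot, finrank_bot] at hU
      omega
  rw [← hWA, ← hUA']
  exact exists_isometryEquiv_map_sup_eq hB hA_ker hA'_ker hAA' inf_le_right inf_le_right hker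

end Signature

/-- Two subspaces `U`, `W` of `V` are carried to each other by a linear isometry of `V` if and
only if `sign U = sign W` and `dim (U ∩ rad V) = dim (W ∩ rad V)`. -/
theorem subspaces_isometric_iff {V : Type*} [AddCommGroup V] [Module ℝ V]
    [FiniteDimensional ℝ V] (B : LinearMap.BilinForm ℝ V) (hB : ∀ x y, B x y = B y x)
    (U W : Submodule ℝ V) :
    (∃ f : V ≃ₗ[ℝ] V, (∀ x y : V, B (f x) (f y) = B x y) ∧ U = W.map f.toLinearMap) ↔
      (signat B U = signat B W ∧
        finrank ℝ (U ⊓ rad B ⊤ : Submodule ℝ V) = finrank ℝ (W ⊓ rad B ⊤ : Submodule ℝ V)) := by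
  constructor
  · rintro ⟨f, hf, rfl⟩
    exact ⟨signat_map f hf, finrank_map_inf_rad_top f hf W⟩
  · rintro ⟨hsign, hrad⟩
    rw [rad_top ⟨hB⟩] at hrad
    obtain ⟨f, hf⟩ := exists_isometryEquiv_map_eq_of_signat_eq ⟨hB⟩ hsign.symm hrad.symm
    exact ⟨f.toLinearEquiv, f.map_app', hf.symm⟩
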